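/- arXiv:math-ph/0105040 — 3 statements merged into one kernel-verified Lean document; each statement's English description precedes it below -/
import Mathlib

section
/- Symmetry of the energy–momentum tensor at the level of cycles: fix n ≥ 2. For μ, ν ∈ {0,1} set G_{μν} := (ē₁ − (−1)^ν·e₁) · ( (−1)^{μ+n}·Π·∏_{a=1}^{n−1} A_a^{2a−1} + ∏_{a=1}^{n−1} A_a^{2a+1} ). Then for all μ, ν ∈ {0,1}, Asym(G_{μν}) − Asym(G_{νμ}) ∈ K. -/
open Finset Equiv

/-- The polynomial ring `ℂ[A₁,…,A_{n−1}, B₁,…,B_{2n}]`. -/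
abbrev PolyRing (n : ℕ) := MvPolynomial (Fin (n - 1) ⊕ Fin (2 * n)) ℂ

/-- The field `F = ℂ(A₁,…,A_{n−1}, B₁,…,B_{2n})` of rational functions. -/
abbrev RatField (n : ℕ) := FractionRing (PolyRing n)

/-- The variable `A_a` (indexed from `0`) inside `F`. -/
noncomputable def Av (n : ℕ) (a : Fin (n - 1)) : RatField n :=
  algebraMap (PolyRing n) (RatField n) (MvPolynomial.X (Sum.inl a))

/-- The variable `B_j` (indexed from `0`) inside `F`. -/
noncomputable def Bv (n : ℕ) (j : Fin (2 * n)) : RatField n :=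
  algebraMap (PolyRing n) (RatField n) (MvPolynomial.X (Sum.inr j))

/-- The field automorphism of `F` substituting `A_a ↦ A_{σ(a)}` (fixing the `B`'s). -/
noncomputable def permA (n : ℕ) (σ : Equiv.Perm (Fin (n - 1))) :
    RatField n ≃+* RatField n :=
  IsFractionRing.ringEquivOfRingEquiv
    ((MvPolynomial.renameEquiv ℂ (Equiv.sumCongr σ (Equiv.refl (Fin (2 * n))))).toRingEquiv)

/-- Antisymmetrization over the `A`-variables:
`Asym f := ∑_{σ ∈ S_{n−1}} sgn(σ)·f(A_{σ(1)},…,A_{σ(n−1)})`. -/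
noncomputable def Asym (n : ℕ) (x : RatField n) : RatField n :=
  ∑ σ : Equiv.Perm (Fin (n - 1)), ((Equiv.Perm.sign σ : ℤ) : RatField n) * permA n σ x

/-- `Θ̂₊(x) := ∏_{j=1}^{2n}(1 + x·B_j⁻¹)`. -/
noncomputable def ThetaP (n : ℕ) (x : RatField n) : RatField n :=
  ∏ j, (1 + x * (Bv n j)⁻¹)

/-- `Θ̂₋(x) := ∏_{j=1}^{2n}(1 − x·B_j⁻¹)`. -/
noncomputable def ThetaM (n : ℕ) (x : RatField n) : RatField n :=
  ∏ j, (1 - x * (Bv n j)⁻¹)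

/-- `Ξ̂¹(x) := Θ̂₊(x) − Θ̂₋(x)`. -/
noncomputable def Xi1 (n : ℕ) (x : RatField n) : RatField n :=
  ThetaP n x - ThetaM n x

/-- `Ξ̂²(x,y) := (Θ̂₊(x)Θ̂₊(y) − Θ̂₋(x)Θ̂₋(y))·(x−y)/(x+y) + Θ̂₊(x)Θ̂₋(y) − Θ̂₋(x)Θ̂₊(y)`. -/
noncomputable def Xi2 (n : ℕ) (x y : RatField n) : RatField n :=
  (ThetaP n x * ThetaP n y - ThetaM n x * ThetaM n y) * (x - y) / (x + y) +
    ThetaP n x * ThetaM n y - ThetaM n x * ThetaP n y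

/-- The subfield `𝔹 = ℂ(B₁,…,B_{2n}) ⊆ F`. -/
noncomputable def BField (n : ℕ) : Subfield (RatField n) :=
  Subfield.closure
    (Set.range (fun c : ℂ => algebraMap (PolyRing n) (RatField n) (MvPolynomial.C c)) ∪
      Set.range (Bv n))

/-- The `𝔹`-submodule `K ⊆ F` spanned by the antisymmetrized deformed cycles
`Asym(Ξ̂¹(A₁)·∏_{a=2}^{n−1} A_a^{r_a})` and
`Asym(Ξ̂²(A₁,A₂)·∏_{a=3}^{n−1} A_a^{r_a})` with `0 ≤ r_a ≤ 2n−1`. -/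
noncomputable def Kspan (n : ℕ) : Submodule (BField n) (RatField n) :=
  Submodule.span (BField n)
    ({x | ∃ (h : 0 < n - 1) (r : Fin (n - 1) → ℕ), (∀ a, r a ≤ 2 * n - 1) ∧
        x = Asym n (Xi1 n (Av n ⟨0, h⟩) *
          ∏ a ∈ Finset.univ.filter (fun a : Fin (n - 1) => 0 < (a : ℕ)),
            (Av n a) ^ (r a))} ∪
     {x | ∃ (h : 1 < n - 1) (r : Fin (n - 1) → ℕ), (∀ a, r a ≤ 2 * n - 1) ∧
        x = Asym n (Xi2 n (Av n ⟨0, by omega⟩) (Av n ⟨1, h⟩) *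
          ∏ a ∈ Finset.univ.filter (fun a : Fin (n - 1) => 1 < (a : ℕ)),
            (Av n a) ^ (r a))})

/-- `e₁ = ∑_j B_j`. -/
noncomputable def eOne (n : ℕ) : RatField n := ∑ j, Bv n j

/-- `ē₁ = ∑_j B_j⁻¹`. -/
noncomputable def eBarOne (n : ℕ) : RatField n := ∑ j, (Bv n j)⁻¹

/-- `Π = ∏_j B_j`. -/
noncomputable def PiB (n : ℕ) : RatField n := ∏ j, Bv n j

/-- The cycle `G_{μν} = (ē₁ − (−1)^ν·e₁)·((−1)^{μ+n}·Π·∏_{a=1}^{n−1} A_a^{2a−1}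
  + ∏_{a=1}^{n−1} A_a^{2a+1})` of the energy–momentum tensor. -/
noncomputable def Gcyc (n : ℕ) (μ ν : Fin 2) : RatField n :=
  (eBarOne n - (-1 : RatField n) ^ (ν : ℕ) * eOne n) *
    ((-1 : RatField n) ^ ((μ : ℕ) + n) * PiB n *
        (∏ a : Fin (n - 1), (Av n a) ^ (2 * (a : ℕ) + 1)) +
      ∏ a : Fin (n - 1), (Av n a) ^ (2 * (a : ℕ) + 3))


lemma permA_algebraMap (n : ℕ) (σ : Equiv.Perm (Fin (n - 1))) (p : PolyRing n) :
    permA n σ (algebraMap (PolyRing n) (RatField n) p) =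
      algebraMap (PolyRing n) (RatField n)
        (MvPolynomial.rename (Equiv.sumCongr σ (Equiv.refl (Fin (2 * n)))) p) := by
  unfold permA
  rw [IsFractionRing.ringEquivOfRingEquiv_algebraMap]
  rfl

lemma permA_Av (n : ℕ) (σ : Equiv.Perm (Fin (n - 1))) (a : Fin (n - 1)) :
    permA n σ (Av n a) = Av n (σ a) := by
  unfold Av
  rw [permA_algebraMap, MvPolynomial.rename_X]
  rfl

lemma permA_fix (n : ℕ) (σ : Equiv.Perm (Fin (n - 1))) (x : RatField n) (hx : x ∈ BField n) :
    permA n σ x = x := by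
  unfold BField at hx
  induction hx using Subfield.closure_induction with
  | mem x hx =>
    rcases hx with ⟨c, rfl⟩ | ⟨j, rfl⟩
    · simp only [permA_algebraMap, MvPolynomial.rename_C]
    · unfold Bv
      rw [permA_algebraMap, MvPolynomial.rename_X]
      rfl
  | one => simp
  | add x y _ _ hx hy => rw [map_add, hx, hy]
  | neg x _ hx => rw [map_neg, hx]
  | inv x _ hx => rw [map_inv₀, hx]
  | mul x y _ _ hx hy => rw [map_mul, hx, hy]

lemma Bv_mem (n : ℕ) (j : Fin (2 * n)) : Bv n j ∈ BField n :=
  Subfield.subset_closure (Or.inr ⟨j, rfl⟩)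

lemma Bv_ne (n : ℕ) (j : Fin (2 * n)) : Bv n j ≠ 0 := by
  unfold Bv
  rw [Ne, FaithfulSMul.algebraMap_eq_zero_iff]
  exact MvPolynomial.X_ne_zero _

lemma PiB_mem (n : ℕ) : PiB n ∈ BField n := prod_mem fun j _ => Bv_mem n j
lemma eOne_mem (n : ℕ) : eOne n ∈ BField n := sum_mem fun j _ => Bv_mem n j
lemma eBarOne_mem (n : ℕ) : eBarOne n ∈ BField n :=
  sum_mem fun j _ => inv_mem (Bv_mem n j)

lemma Asym_add (n : ℕ) (x y : RatField n) : Asym n (x + y) = Asym n x + Asym n y := by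
  simp [Asym, mul_add, Finset.sum_add_distrib]

lemma Asym_sum (n : ℕ) {ι : Type*} (s : Finset ι) (f : ι → RatField n) :
    Asym n (∑ i ∈ s, f i) = ∑ i ∈ s, Asym n (f i) := by
  simp only [Asym, map_sum, Finset.mul_sum]
  rw [Finset.sum_comm]

lemma Asym_smul (n : ℕ) (c x : RatField n) (hc : c ∈ BField n) :
    Asym n (c * x) = c * Asym n x := by
  simp only [Asym, map_mul, Finset.mul_sum, permA_fix n _ c hc]
  exact Finset.sum_congr rfl fun _ _ => by ring

lemma Asym_mono (n : ℕ) (r : Fin (n - 1) → ℕ) :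
    Asym n (∏ a, Av n a ^ r a) =
      (Matrix.of fun i j : Fin (n - 1) => Av n i ^ r j).det := by
  rw [Matrix.det_apply']
  simp [Asym, permA_Av]

lemma det_rot {F : Type*} [Field F] (m : ℕ) (x : Fin (m + 1) → F) :
    (Matrix.of fun i j : Fin (m + 1) => x i ^ (2 * (j : ℕ) + 3)).det =
      (-1) ^ m * (Matrix.of fun i j : Fin (m + 1) =>
        x i ^ (if 0 < (j : ℕ) then 2 * (j : ℕ) + 1 else 2 * m + 3)).det := by
  have h := Matrix.det_permute' (finRotate (m + 1)) (Matrix.of fun i j : Fin (m + 1) =>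
        x i ^ (if 0 < (j : ℕ) then 2 * (j : ℕ) + 1 else 2 * m + 3))
  rw [sign_finRotate] at h
  push_cast at h
  rw [← h]
  congr 1
  ext i j
  simp only [Matrix.of_apply, Matrix.submatrix_apply, id]
  congr 1
  rw [coe_finRotate]
  by_cases hj : j = Fin.last m
  · simp [hj]
  · have : (j : ℕ) ≠ m := fun h => hj (Fin.ext h)
    simp [hj]
    ring

/-- elementary symmetric functions of the inverses -/
noncomputable def Ek (n k : ℕ) : RatField n :=
  ∑ t ∈ Finset.powersetCard k (Finset.univ : Finset (Fin (2 * n))), ∏ j ∈ t, (Bv n j)⁻¹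

lemma Ek_mem (n k : ℕ) : Ek n k ∈ BField n :=
  sum_mem fun _ _ => prod_mem fun j _ => inv_mem (Bv_mem n j)

lemma theta_expand (n : ℕ) (x : RatField n) :
    ThetaP n x = ∑ k ∈ range (2 * n + 1), Ek n k * x ^ k := by
  unfold ThetaP Ek
  rw [Finset.prod_one_add, Finset.sum_powerset]
  simp only [Finset.card_univ, Fintype.card_fin]
  refine Finset.sum_congr rfl fun k _ => ?_
  rw [Finset.sum_mul]
  refine Finset.sum_congr rfl fun t ht => ?_
  rw [Finset.prod_mul_distrib, Finset.prod_const, (Finset.mem_powersetCard.1 ht).2, mul_comm]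

lemma Xi1_expand (n : ℕ) (x : RatField n) :
    Xi1 n x = ∑ k ∈ range (2 * n + 1), ((1 - (-1) ^ k) * Ek n k) * x ^ k := by
  have h : ThetaM n x = ThetaP n (-x) := by
    unfold ThetaM ThetaP
    exact Finset.prod_congr rfl fun _ _ => by ring
  rw [Xi1, h, theta_expand, theta_expand, ← Finset.sum_sub_distrib]
  refine Finset.sum_congr rfl fun k _ => ?_
  rw [neg_pow]
  ring

lemma Ek_one (n : ℕ) : Ek n 1 = eBarOne n := by
  simp [Ek, eBarOne, Finset.powersetCard_one]

lemma Ek_last (n : ℕ) (hn : 2 ≤ n) : PiB n * Ek n (2 * n - 1) = eOne n := by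
  have h : Finset.powersetCard (2 * n - 1) (Finset.univ : Finset (Fin (2 * n))) =
      Finset.univ.image fun j => ({j} : Finset (Fin (2 * n)))ᶜ := by
    ext t
    simp only [Finset.mem_powersetCard, Finset.subset_univ, true_and, Finset.mem_image,
      Finset.mem_univ]
    constructor
    · intro ht
      have : tᶜ.card = 1 := by
        rw [Finset.card_compl, ht, Fintype.card_fin]; omega
      obtain ⟨j, hj⟩ := Finset.card_eq_one.1 this
      exact ⟨j, by rw [← hj, compl_compl]⟩
    · rintro ⟨j, rfl⟩
      rw [Finset.card_compl, Fintype.card_fin, Finset.card_singleton]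
  unfold Ek eOne PiB
  rw [h, Finset.sum_image (fun a _ b _ hab => by simpa using hab), Finset.mul_sum]
  refine Finset.sum_congr rfl fun j _ => ?_
  rw [← Finset.prod_mul_prod_compl {j} (fun j => Bv n j), Finset.prod_singleton, mul_assoc,
    ← Finset.prod_mul_distrib,
    Finset.prod_eq_one (fun i _ => mul_inv_cancel₀ (Bv_ne n i)), mul_one]

/-- determinant with first exponent `k` -/
noncomputable def Dk (n k : ℕ) : RatField n :=
  (Matrix.of fun i j : Fin (n - 1) =>
    Av n i ^ (if 0 < (j : ℕ) then 2 * (j : ℕ) + 1 else k)).det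

lemma Dk_zero (n k : ℕ) (hn : 2 ≤ n) (hk : Odd k) (h1 : k ≠ 1) (h2 : k < 2 * n - 1) :
    Dk n k = 0 := by
  obtain ⟨l, rfl⟩ := hk
  unfold Dk
  refine Matrix.det_zero_of_column_eq (i := ⟨0, by omega⟩) (j := ⟨l, by omega⟩) ?_ ?_
  · simp only [ne_eq, Fin.mk.injEq]; omega
  · intro i
    have : 0 < l := by omega
    simp [this]

lemma Asym_gen (n : ℕ) (hn : 2 ≤ n) :
    Asym n (Xi1 n (Av n ⟨0, by omega⟩) *
          ∏ a ∈ Finset.univ.filter (fun a : Fin (n - 1) => 0 < (a : ℕ)),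
            (Av n a) ^ (2 * (a : ℕ) + 1)) =
      2 * Ek n 1 * Dk n 1 + 2 * Ek n (2 * n - 1) * Dk n (2 * n - 1) := by
  have hterm : ∀ k, Asym n (((1 - (-1) ^ k) * Ek n k) * Av n ⟨0, by omega⟩ ^ k *
      ∏ a ∈ Finset.univ.filter (fun a : Fin (n - 1) => 0 < (a : ℕ)),
            (Av n a) ^ (2 * (a : ℕ) + 1)) = ((1 - (-1) ^ k) * Ek n k) * Dk n k := by
    intro k
    rw [mul_assoc, Asym_smul]
    · rw [Dk, ← Asym_mono]
      congr 2
      rw [← Finset.prod_filter_mul_prod_filter_not Finset.univ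
        (fun a : Fin (n - 1) => 0 < (a : ℕ)), mul_comm]
      congr 1
      · refine Finset.prod_congr rfl fun a ha => ?_
        rw [if_pos (Finset.mem_filter.1 ha).2]
      · have : Finset.univ.filter (fun a : Fin (n - 1) => ¬ 0 < (a : ℕ)) =
            {⟨0, by omega⟩} := by
          ext a
          simp [Fin.ext_iff]
        rw [this, Finset.prod_singleton]
        simp
    · exact mul_mem (sub_mem (one_mem _) (pow_mem (neg_mem (one_mem _)) _)) (Ek_mem n k)
  rw [Xi1_expand, Finset.sum_mul, Asym_sum]
  simp only [hterm]
  rw [Finset.sum_eq_add 1 (2 * n - 1) (by omega)]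
  · have : Odd (2 * n - 1) := ⟨n - 1, by omega⟩
    rw [this.neg_one_pow]
    ring
  · intro k hk hne
    rw [Finset.mem_range] at hk
    rcases Nat.even_or_odd k with h | h
    · rw [h.neg_one_pow]; ring
    · rw [Dk_zero n k hn h hne.1, mul_zero]
      obtain ⟨l, rfl⟩ := h
      omega
  · intro h; exact absurd (Finset.mem_range.2 (by omega)) h
  · intro h; exact absurd (Finset.mem_range.2 (by omega)) h

lemma Asym_P1 (n : ℕ) : Asym n (∏ a : Fin (n - 1), (Av n a) ^ (2 * (a : ℕ) + 1)) = Dk n 1 := by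
  rw [Asym_mono, Dk]
  congr 1
  ext i j
  simp only [Matrix.of_apply]
  congr 1
  split_ifs <;> omega

lemma Asym_P3 (n : ℕ) (hn : 2 ≤ n) :
    Asym n (∏ a : Fin (n - 1), (Av n a) ^ (2 * (a : ℕ) + 3)) =
      (-1) ^ n * Dk n (2 * n - 1) := by
  rw [Asym_mono, Dk]
  obtain ⟨m, rfl⟩ : ∃ m, n = m + 2 := ⟨n - 2, by omega⟩
  rw [pow_add, neg_one_sq, mul_one]
  exact det_rot m (Av (m + 2))

lemma Asym_G (n : ℕ) (hn : 2 ≤ n) (μ ν : Fin 2) :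
    Asym n (Gcyc n μ ν) = (eBarOne n - (-1 : RatField n) ^ (ν : ℕ) * eOne n) *
    ((-1 : RatField n) ^ ((μ : ℕ) + n) * PiB n * Dk n 1 + (-1) ^ n * Dk n (2 * n - 1)) := by
  have h1 : ∀ k, (-1 : RatField n) ^ k ∈ BField n := fun k => pow_mem (neg_mem (one_mem _)) _
  rw [Gcyc, Asym_smul _ _ _ (sub_mem (eBarOne_mem n) (mul_mem (h1 _) (eOne_mem n))),
    Asym_add, Asym_smul _ _ _ (mul_mem (h1 _) (PiB_mem n)), Asym_P1, Asym_P3 n hn]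

lemma key (n : ℕ) (hn : 2 ≤ n) :
    Asym n (Gcyc n 0 1) - Asym n (Gcyc n 1 0) ∈ Kspan n := by
  have hg : Asym n (Xi1 n (Av n ⟨0, by omega⟩) *
          ∏ a ∈ Finset.univ.filter (fun a : Fin (n - 1) => 0 < (a : ℕ)),
            (Av n a) ^ (2 * (a : ℕ) + 1)) ∈ Kspan n := by
    refine Submodule.subset_span (Or.inl ⟨by omega, fun a => 2 * (a : ℕ) + 1, ?_, rfl⟩)
    intro a
    have := a.2
    show 2 * (a : ℕ) + 1 ≤ 2 * n - 1
    omega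
  have hc : (-1) ^ n * PiB n ∈ BField n := mul_mem (pow_mem (neg_mem (one_mem _)) _) (PiB_mem n)
  have := Submodule.smul_mem (Kspan n) (⟨_, hc⟩ : BField n) hg
  convert this using 1
  rw [Asym_gen n hn, Asym_G n hn, Asym_G n hn, Ek_one, Subfield.smul_def, smul_eq_mul,
    ← Ek_last n hn]
  simp only [Fin.val_zero, Fin.val_one, pow_zero, pow_one, pow_add]
  ring

/-- Symmetry of the energy–momentum tensor at the level of cycles: for `n ≥ 2`
and `μ, ν ∈ {0,1}`, `Asym(G_{μν}) − Asym(G_{νμ}) ∈ K`. -/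
theorem emTensor_symmetric (n : ℕ) (hn : 2 ≤ n) (μ ν : Fin 2) :
    Asym n (Gcyc n μ ν) - Asym n (Gcyc n ν μ) ∈ Kspan n := by
  have h := key n hn
  fin_cases μ <;> fin_cases ν
  · simp
  · exact h
  · rw [← neg_sub]; exact neg_mem h
  · simp
end

section
/- Conservation law of the energy–momentum tensor at the level of cycles: fix n ≥ 2. With G_{μν} := (ē₁ − (−1)^ν·e₁) · ( (−1)^{μ+n}·Π·∏_{a=1}^{n−1} A_a^{2a−1} + ∏_{a=1}^{n−1} A_a^{2a+1} ), one has, for each ν ∈ {0,1}: Asym( (ē₁ + e₁)·G_{0ν} − (ē₁ − e₁)·G_{1ν} ) ∈ K. -/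
open Finset Equiv

lemma permA_Bv (n : ℕ) (σ : Equiv.Perm (Fin (n - 1))) (j : Fin (2 * n)) :
    permA n σ (Bv n j) = Bv n j := by
  unfold permA Bv
  rw [IsFractionRing.ringEquivOfRingEquiv_algebraMap]
  congr 1
  change MvPolynomial.rename _ _ = _
  simp

/-- The determinant attached to an exponent vector. -/
noncomputable def detE (n : ℕ) (r : Fin (n - 1) → ℕ) : RatField n :=
  (Matrix.of fun i j => Av n i ^ r j).det

lemma Asym_mono_s15 (n : ℕ) (c : RatField n) (hc : ∀ σ, permA n σ c = c) (r : Fin (n - 1) → ℕ) :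
    Asym n (c * ∏ a, Av n a ^ r a) = c * detE n r := by
  unfold Asym detE
  rw [Matrix.det_apply', Finset.mul_sum]
  refine Finset.sum_congr rfl fun σ _ => ?_
  rw [map_mul, hc, map_prod]
  simp only [map_pow, permA_Av, Matrix.of_apply]
  ring

lemma Xi1_eq (n : ℕ) (x : RatField n) :
    Xi1 n x = ∑ t ∈ (univ : Finset (Fin (2 * n))).powerset,
      ((1 - (-1) ^ #t) * ∏ j ∈ t, (Bv n j)⁻¹) * x ^ #t := by
  have hm : ThetaM n x = ∏ j, (1 + (-x * (Bv n j)⁻¹)) := by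
    unfold ThetaM
    refine Finset.prod_congr rfl fun j _ => by ring
  unfold Xi1
  rw [hm]
  unfold ThetaP
  rw [Finset.prod_one_add, Finset.prod_one_add, ← Finset.sum_sub_distrib]
  refine Finset.sum_congr rfl fun t _ => ?_
  rw [Finset.prod_mul_distrib, Finset.prod_mul_distrib, Finset.prod_const, Finset.prod_const,
    neg_pow]
  ring

lemma prod_split (k : ℕ) (p : ℕ) :
    ∏ a, Av (k + 2) a ^ (Function.update (fun a : Fin (k + 2 - 1) => 2 * (a : ℕ) + 1)
        (⟨0, by omega⟩ : Fin (k + 2 - 1)) p) a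
      = Av (k + 2) ⟨0, by omega⟩ ^ p *
        ∏ a ∈ Finset.univ.filter (fun a : Fin (k + 2 - 1) => 0 < (a : ℕ)),
            (Av (k + 2) a) ^ (2 * (a : ℕ) + 1) := by
  rw [← Finset.mul_prod_erase univ _ (Finset.mem_univ (⟨0, by omega⟩ : Fin (k + 2 - 1)))]
  refine congrArg₂ (· * ·) ?_ ?_
  · rw [Function.update_self]
  · have : (univ.erase (⟨0, by omega⟩ : Fin (k + 2 - 1)))
        = Finset.univ.filter (fun a : Fin (k + 2 - 1) => 0 < (a : ℕ)) := by
      ext a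
      simp only [Finset.mem_erase, Finset.mem_univ, and_true, Finset.mem_filter, true_and, ne_eq,
        Fin.ext_iff]
      omega
    rw [this]
    refine Finset.prod_congr rfl fun a ha => ?_
    rw [Function.update_of_ne]
    rintro rfl
    simp at ha

/-- Determinant with the zeroth exponent replaced by `p`. -/
noncomputable def detD (k p : ℕ) : RatField (k + 2) :=
  detE (k + 2) (Function.update (fun a : Fin (k + 2 - 1) => 2 * (a : ℕ) + 1)
        (⟨0, by omega⟩ : Fin (k + 2 - 1)) p)

lemma detD_one (k : ℕ) : detD k 1 = detE (k + 2) (fun a => 2 * (a : ℕ) + 1) := by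
  unfold detD
  congr 1
  exact Function.update_eq_self_iff.2 rfl

lemma detD_last (k : ℕ) :
    detE (k + 2) (fun a => 2 * (a : ℕ) + 3) = (-1) ^ k * detD k (2 * k + 3) := by
  have h := Matrix.det_permute' (finRotate (k + 1))
    (Matrix.of fun i j : Fin (k + 1) => Av (k + 2) i ^
      (Function.update (fun a : Fin (k + 1) => 2 * (a : ℕ) + 1) 0 (2 * k + 3)) j)
  rw [sign_finRotate] at h
  have e : detD k (2 * k + 3) = (Matrix.of fun i j : Fin (k + 1) => Av (k + 2) i ^
      (Function.update (fun a : Fin (k + 1) => 2 * (a : ℕ) + 1) 0 (2 * k + 3)) j).det := rfl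
  rw [e]
  have e2 : (((-1) ^ (k + 1 - 1) : ℤˣ) : ℤ) = (-1) ^ k := by simp
  rw [e2] at h
  push_cast at h
  rw [← h]
  unfold detE
  change Matrix.det (n := Fin (k + 1)) _ = _
  congr 1
  ext i j
  simp only [Matrix.of_apply, Matrix.submatrix_apply, id]
  congr 1
  by_cases hj : j = Fin.last k
  · subst hj
    simp
  · have hlt : (j : ℕ) < k := by
      have := j.2
      have : (j : ℕ) ≠ k := fun h => hj (Fin.ext h)
      omega
    have hv : ((finRotate (k + 1) j : Fin (k + 1)) : ℕ) = j + 1 := coe_finRotate_of_ne_last hj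
    rw [Function.update_of_ne]
    · rw [hv]; ring
    · intro h0
      rw [h0] at hv
      simp at hv

lemma detD_zero (k p : ℕ) (hp : Odd p) (h1 : 1 < p) (h2 : p < 2 * k + 3) : detD k p = 0 := by
  obtain ⟨q, rfl⟩ := hp
  unfold detD detE
  refine Matrix.det_zero_of_column_eq (i := ⟨0, by omega⟩) (j := ⟨q, by omega⟩) ?_ ?_
  · simp [Fin.ext_iff]; omega
  · intro i
    simp only [Matrix.of_apply]
    rw [Function.update_self, Function.update_of_ne]
    simp [Fin.ext_iff]; omega

lemma sum_card_one {ι R : Type*} [Fintype ι] [DecidableEq ι] [CommRing R] (f : ι → R) :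
    ∑ t ∈ (univ : Finset ι).powerset, (if #t = 1 then ∏ j ∈ t, f j else 0) = ∑ j, f j := by
  rw [← Finset.sum_filter, ← Finset.powersetCard_eq_filter, Finset.powersetCard_one]
  simp

lemma sum_card_last (n : ℕ) (hn : 2 ≤ n) :
    PiB n * ∑ t ∈ (univ : Finset (Fin (2 * n))).powerset,
      (if #t = 2 * n - 1 then ∏ j ∈ t, (Bv n j)⁻¹ else 0) = eOne n := by
  unfold eOne
  rw [← sum_card_one (Bv n), Finset.mul_sum, Finset.powerset_univ]
  refine Finset.sum_equiv (Function.Involutive.toPerm compl compl_involutive) (by simp) ?_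
  intro t _
  simp only [Function.Involutive.coe_toPerm, Finset.card_compl, Fintype.card_fin]
  have hc : #t ≤ 2 * n := by simpa using Finset.card_le_univ t
  by_cases h : #t = 2 * n - 1
  · rw [if_pos h, if_pos (by omega)]
    unfold PiB
    rw [← Finset.prod_mul_prod_compl t (Bv n), Finset.prod_inv_distrib]
    have : ∏ j ∈ t, Bv n j ≠ 0 := Finset.prod_ne_zero_iff.2 fun j _ => Bv_ne n j
    field_simp
  · rw [if_neg h, if_neg (by omega), mul_zero]

lemma gen_eq (k : ℕ) :
    PiB (k + 2) * Asym (k + 2) (Xi1 (k + 2) (Av (k + 2) ⟨0, by omega⟩) *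
          ∏ a ∈ Finset.univ.filter (fun a : Fin (k + 2 - 1) => 0 < (a : ℕ)),
            (Av (k + 2) a) ^ (2 * (a : ℕ) + 1))
      = 2 * (PiB (k + 2) * eBarOne (k + 2) * detD k 1 + eOne (k + 2) * detD k (2 * k + 3)) := by
  rw [Xi1_eq, Finset.sum_mul]
  simp only [mul_assoc _ (Av (k + 2) _ ^ _), ← prod_split]
  rw [Asym_sum]
  have key : ∀ t ∈ (univ : Finset (Fin (2 * (k + 2)))).powerset,
      Asym (k + 2) (((1 - (-1) ^ #t) * ∏ j ∈ t, (Bv (k + 2) j)⁻¹) *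
        ∏ a, Av (k + 2) a ^ (Function.update (fun a : Fin (k + 2 - 1) => 2 * (a : ℕ) + 1)
          (⟨0, by omega⟩ : Fin (k + 2 - 1)) #t) a)
      = (if #t = 1 then ∏ j ∈ t, (Bv (k + 2) j)⁻¹ else 0) * (2 * detD k 1) +
        (if #t = 2 * (k + 2) - 1 then ∏ j ∈ t, (Bv (k + 2) j)⁻¹ else 0)
          * (2 * detD k (2 * k + 3)) := by
    intro t _
    have hc : #t ≤ 2 * (k + 2) := by simpa using Finset.card_le_univ t
    rw [Asym_mono_s15 _ _ (by intro σ; simp [map_prod, permA_Bv])]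
    change _ * detD k #t = _
    rcases Nat.even_or_odd #t with he | ho
    · rw [he.neg_one_pow, if_neg, if_neg]
      · ring
      · intro h; rw [h] at he; rcases he with ⟨q, hq⟩; omega
      · intro h; rw [h] at he; rcases he with ⟨q, hq⟩; omega
    · rw [ho.neg_one_pow]
      by_cases h1 : #t = 1
      · rw [if_pos h1, if_neg (by omega), h1]; ring
      · by_cases h2 : #t = 2 * k + 3
        · rw [if_neg h1, if_pos (by omega), h2]; ring
        · have ho' := ho
          rcases ho with ⟨q, hq⟩
          rw [if_neg h1, if_neg (by omega), detD_zero k _ ho' (by omega) (by omega)]; ring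
  rw [Finset.sum_congr rfl key, Finset.sum_add_distrib, ← Finset.sum_mul, ← Finset.sum_mul,
    sum_card_one, mul_add, ← mul_assoc (PiB _) (∑ t ∈ _, _) (2 * detD k (2 * k + 3)),
    sum_card_last _ (by omega)]
  unfold eBarOne
  ring

/-- Conservation law of the energy–momentum tensor at the level of cycles:
for `n ≥ 2` and each `ν ∈ {0,1}`,
`Asym((ē₁ + e₁)·G_{0ν} − (ē₁ − e₁)·G_{1ν}) ∈ K`. -/
theorem emTensor_conservation (n : ℕ) (hn : 2 ≤ n) (ν : Fin 2) :
    Asym n ((eBarOne n + eOne n) * Gcyc n 0 ν -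
      (eBarOne n - eOne n) * Gcyc n 1 ν) ∈ Kspan n := by
  obtain ⟨k, rfl⟩ : ∃ k, n = k + 2 := ⟨n - 2, by omega⟩
  have he : eOne (k + 2) ∈ BField (k + 2) := sum_mem fun j _ => Bv_mem _ j
  have hb : eBarOne (k + 2) ∈ BField (k + 2) := sum_mem fun j _ => inv_mem (Bv_mem _ j)
  have hP : PiB (k + 2) ∈ BField (k + 2) := prod_mem fun j _ => Bv_mem _ j
  have fe : ∀ σ, permA (k + 2) σ (eOne (k + 2)) = eOne (k + 2) := by
    intro σ; simp [eOne, permA_Bv]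
  have fb : ∀ σ, permA (k + 2) σ (eBarOne (k + 2)) = eBarOne (k + 2) := by
    intro σ; simp [eBarOne, permA_Bv]
  have fP : ∀ σ, permA (k + 2) σ (PiB (k + 2)) = PiB (k + 2) := by
    intro σ; simp [PiB, permA_Bv]
  set c : RatField (k + 2) := eBarOne (k + 2) - (-1) ^ (ν : ℕ) * eOne (k + 2) with hc
  have hcm : c ∈ BField (k + 2) :=
    sub_mem hb (mul_mem (pow_mem (neg_mem (one_mem _)) _) he)
  have fc : ∀ σ, permA (k + 2) σ c = c := by
    intro σ; simp [hc, fe, fb]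
  have f2 : ∀ σ, permA (k + 2) σ 2 = 2 := fun σ => map_ofNat _ 2
  have h1 : (eBarOne (k + 2) + eOne (k + 2)) * Gcyc (k + 2) 0 ν -
      (eBarOne (k + 2) - eOne (k + 2)) * Gcyc (k + 2) 1 ν
      = (c * 2 * eBarOne (k + 2) * (-1) ^ k * PiB (k + 2)) *
          (∏ a : Fin (k + 2 - 1), (Av (k + 2) a) ^ (2 * (a : ℕ) + 1)) +
        (c * 2 * eOne (k + 2)) *
          (∏ a : Fin (k + 2 - 1), (Av (k + 2) a) ^ (2 * (a : ℕ) + 3)) := by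
    unfold Gcyc
    rw [← hc]
    simp only [Fin.val_zero, Fin.val_one, pow_add]
    ring
  rw [h1, Asym_add, Asym_mono_s15 _ _ (by intro σ; simp [fc, fb, fP, f2]),
    Asym_mono_s15 _ _ (by intro σ; simp [fc, fe, f2]), detD_last, ← detD_one]
  have hg := gen_eq k
  set g := Asym (k + 2) (Xi1 (k + 2) (Av (k + 2) ⟨0, by omega⟩) *
          ∏ a ∈ Finset.univ.filter (fun a : Fin (k + 2 - 1) => 0 < (a : ℕ)),
            (Av (k + 2) a) ^ (2 * (a : ℕ) + 1)) with hgd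
  have hgm : g ∈ Kspan (k + 2) :=
    Submodule.subset_span (Or.inl ⟨by omega, fun a => 2 * (a : ℕ) + 1,
      fun a => by have := a.2; show 2 * (a : ℕ) + 1 ≤ _; omega, hgd⟩)
  have hm : c * (-1) ^ k * PiB (k + 2) ∈ BField (k + 2) :=
    mul_mem (mul_mem hcm (pow_mem (neg_mem (one_mem _)) _)) hP
  have := (Kspan (k + 2)).smul_mem ⟨_, hm⟩ hgm
  convert this using 1
  change _ = (c * (-1) ^ k * PiB (k + 2)) * g
  rw [mul_assoc _ (PiB (k + 2)) g, hg]
  ring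
end

section
/- Rewriting of the cycles of Lukyanov's operator Λ₋₁(y): fix n ≥ 2 and an integer l ≥ 0. Then Asym( e₁ · ∑_{k=0}^{n−1} (−1)^k · h_{l−2k} · ∏_{a=1}^{k} A_a^{2n+1−2a} · ∏_{a=k+1}^{n−1} A_a^{2n−1−2a} − ∑_{k=0}^{n−1} e_{2k+1}·h_{l−2k} · ∏_{a=1}^{n−1} A_a^{2n−1−2a} ) ∈ K, where h_j denotes the complete homogeneous symmetric polynomial of degree j in B₁,…,B_{2n} (with h_j := 0 for j < 0) and e_k the k-th elementary symmetric polynomial in B₁,…,B_{2n}. -/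
open Finset Equiv

/-- The complete homogeneous symmetric polynomial `h_j` in `B₁,…,B_{2n}`,
viewed inside `F`. -/
noncomputable def hB (n j : ℕ) : RatField n :=
  algebraMap (PolyRing n) (RatField n)
    (MvPolynomial.rename Sum.inr (MvPolynomial.hsymm (Fin (2 * n)) ℂ j))

/-- `h_j` for an integer index `j`, with `h_j = 0` for `j < 0`. -/
noncomputable def hBInt (n : ℕ) (j : ℤ) : RatField n :=
  if 0 ≤ j then hB n j.toNat else 0

/-- The elementary symmetric polynomial `e_k` in `B₁,…,B_{2n}`, viewed
inside `F`. -/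
noncomputable def eB (n k : ℕ) : RatField n :=
  algebraMap (PolyRing n) (RatField n)
    (MvPolynomial.rename Sum.inr (MvPolynomial.esymm (Fin (2 * n)) ℂ k))

namespace LukHelp

/-- inclusion of polynomials in B -/
noncomputable def phi (n : ℕ) : MvPolynomial (Fin (2 * n)) ℂ →+* RatField n :=
  (algebraMap (PolyRing n) (RatField n)).comp
    (MvPolynomial.rename (R := ℂ) (Sum.inr : Fin (2 * n) → Fin (n - 1) ⊕ Fin (2 * n))).toRingHom

lemma phi_mem (n : ℕ) (p : MvPolynomial (Fin (2 * n)) ℂ) : phi n p ∈ BField n := by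
  induction p using MvPolynomial.induction_on with
  | C a =>
    apply Subfield.subset_closure
    left
    exact ⟨a, by simp [phi]⟩
  | add p q hp hq => rw [map_add]; exact add_mem hp hq
  | mul_X p i hp =>
    rw [map_mul]
    refine mul_mem hp (Subfield.subset_closure (Or.inr ⟨i, ?_⟩))
    simp [phi, Bv]

lemma eB_eq (n k : ℕ) : eB n k = phi n (MvPolynomial.esymm (Fin (2 * n)) ℂ k) := rfl

lemma eB_mem (n k : ℕ) : eB n k ∈ BField n := phi_mem n _

lemma hB_mem (n k : ℕ) : hB n k ∈ BField n := phi_mem n _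

lemma hBInt_mem (n : ℕ) (k : ℤ) : hBInt n k ∈ BField n := by
  unfold hBInt
  split_ifs
  · exact hB_mem _ _
  · exact zero_mem _

lemma phi_X (n : ℕ) (j : Fin (2 * n)) : phi n (MvPolynomial.X j) = Bv n j := by
  simp [phi, Bv]

lemma eOne_eq (n : ℕ) : eOne n = eB n 1 := by
  rw [eB_eq, MvPolynomial.esymm_one, map_sum]
  simp [phi_X, eOne]

lemma permA_algebraMap (n : ℕ) (σ : Equiv.Perm (Fin (n - 1))) (p : PolyRing n) :
    permA n σ (algebraMap _ _ p) = algebraMap (PolyRing n) (RatField n)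
      (MvPolynomial.rename (Equiv.sumCongr σ (Equiv.refl (Fin (2 * n)))) p) := by
  unfold permA
  rw [IsFractionRing.ringEquivOfRingEquiv_algebraMap]
  rfl

lemma permA_Av (n : ℕ) (σ : Equiv.Perm (Fin (n - 1))) (a : Fin (n - 1)) :
    permA n σ (Av n a) = Av n (σ a) := by
  unfold Av
  rw [permA_algebraMap]
  simp

lemma permA_B (n : ℕ) (σ : Equiv.Perm (Fin (n - 1))) (c : RatField n) (hc : c ∈ BField n) :
    permA n σ c = c := by
  have : BField n ≤ RingHom.eqLocusField (permA n σ).toRingHom (RingHom.id (RatField n)) := by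
    unfold BField
    rw [Subfield.closure_le]
    rintro x (⟨a, rfl⟩ | ⟨j, rfl⟩)
    · change permA n σ _ = _
      rw [permA_algebraMap]
      simp
    · change permA n σ _ = _
      unfold Bv
      rw [permA_algebraMap]
      simp
  exact this hc

lemma Asym_add (n : ℕ) (x y : RatField n) : Asym n (x + y) = Asym n x + Asym n y := by
  simp [Asym, mul_add, Finset.sum_add_distrib]

/-- Asym as an additive hom -/
noncomputable def AsymHom (n : ℕ) : RatField n →+ RatField n :=
  AddMonoidHom.mk' (Asym n) (Asym_add n)

lemma Asym_sum {ι : Type*} (n : ℕ) (s : Finset ι) (f : ι → RatField n) :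
    Asym n (∑ i ∈ s, f i) = ∑ i ∈ s, Asym n (f i) := map_sum (AsymHom n) f s

lemma Asym_sub (n : ℕ) (x y : RatField n) : Asym n (x - y) = Asym n x - Asym n y :=
  map_sub (AsymHom n) x y

lemma Asym_mul (n : ℕ) (c x : RatField n) (hc : c ∈ BField n) :
    Asym n (c * x) = c * Asym n x := by
  unfold Asym
  rw [Finset.mul_sum]
  refine Finset.sum_congr rfl fun σ _ => ?_
  rw [map_mul, permA_B n σ c hc]
  ring

/-- antisymmetrized monomial -/
noncomputable def D (n : ℕ) (p : Fin (n - 1) → ℕ) : RatField n :=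
  Asym n (∏ a, Av n a ^ p a)

lemma D_det (n : ℕ) (p : Fin (n - 1) → ℕ) :
    D n p = Matrix.det (Matrix.of fun i j => Av n i ^ p j) := by
  rw [Matrix.det_apply']
  unfold D Asym
  refine Finset.sum_congr rfl fun σ _ => ?_
  simp [map_prod, permA_Av]

lemma D_perm (n : ℕ) (p : Fin (n - 1) → ℕ) (τ : Equiv.Perm (Fin (n - 1))) :
    D n (p ∘ τ) = ((Equiv.Perm.sign τ : ℤ) : RatField n) * D n p := by
  rw [D_det, D_det, ← Matrix.det_permute']
  rfl

lemma D_zero (n : ℕ) (p : Fin (n - 1) → ℕ) (i j : Fin (n - 1)) (hij : i ≠ j)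
    (h : p i = p j) : D n p = 0 := by
  rw [D_det]
  exact Matrix.det_zero_of_column_eq hij (by simp [h])

lemma Bv_ne (n : ℕ) (j : Fin (2 * n)) : Bv n j ≠ 0 := by
  unfold Bv
  rw [Ne, FaithfulSMul.algebraMap_eq_zero_iff]
  exact MvPolynomial.X_ne_zero _

lemma PiB_mem (n : ℕ) : PiB n ∈ BField n :=
  prod_mem fun j _ => by rw [← phi_X]; exact phi_mem n _

lemma prod_add (n : ℕ) (x : RatField n) :
    ∏ j, (x + Bv n j) = ∑ j ∈ range (2 * n + 1), eB n j * x ^ (2 * n - j) := by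
  have h := congrArg (Polynomial.eval₂ (phi n) x)
    (MvPolynomial.prod_C_add_X_eq_sum_esymm ℂ (Fin (2 * n)))
  rw [Polynomial.eval₂_finsetProd, Polynomial.eval₂_finsetSum] at h
  simpa [phi_X, eB_eq, Polynomial.eval₂_mul, Polynomial.eval₂_pow] using h

lemma sum_split {M : Type*} [AddCommMonoid M] (f : ℕ → M) (n : ℕ) :
    ∑ j ∈ range (2 * n + 1), f j
      = f (2 * n) + ∑ m ∈ range n, (f (2 * m) + f (2 * m + 1)) := by
  induction n with
  | zero => simp
  | succ n ih =>
    rw [show 2 * (n + 1) + 1 = 2 * n + 1 + 1 + 1 by ring, sum_range_succ, sum_range_succ, ih,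
      sum_range_succ, show 2 * (n + 1) = 2 * n + 1 + 1 by ring]
    abel

lemma PiB_ThetaP (n : ℕ) (x : RatField n) : PiB n * ThetaP n x = ∏ j, (x + Bv n j) := by
  unfold PiB ThetaP
  rw [← prod_mul_distrib]
  refine prod_congr rfl fun j _ => ?_
  have := Bv_ne n j
  field_simp
  ring

lemma PiB_ThetaM (n : ℕ) (x : RatField n) : PiB n * ThetaM n x = ∏ j, (-x + Bv n j) := by
  rw [← PiB_ThetaP]
  unfold ThetaP ThetaM
  congr 1
  refine prod_congr rfl fun j _ => ?_
  ring

lemma PiB_Xi1 (n : ℕ) (x : RatField n) : PiB n * Xi1 n x =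
    ∑ m ∈ range n, 2 * eB n (2 * m + 1) * x ^ (2 * n - 1 - 2 * m) := by
  unfold Xi1
  rw [mul_sub, PiB_ThetaP, PiB_ThetaM, prod_add, prod_add, ← sum_sub_distrib, sum_split]
  simp only [Nat.sub_self, pow_zero, sub_self, zero_add]
  refine sum_congr rfl fun m hm => ?_
  have hm := mem_range.1 hm
  rw [Even.neg_pow (⟨n - m, by omega⟩ : Even (2 * n - 2 * m)),
    Odd.neg_pow (⟨n - m - 1, by omega⟩ : Odd (2 * n - (2 * m + 1))),
    show 2 * n - 1 - 2 * m = 2 * n - (2 * m + 1) by omega]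
  ring

/-- exponents -/
def pe (n k : ℕ) (a : Fin (n - 1)) : ℕ :=
  if (a : ℕ) < k then 2 * n + 1 - 2 * ((a : ℕ) + 1) else 2 * n - 1 - 2 * ((a : ℕ) + 1)

lemma K_mul (n : ℕ) (c x : RatField n) (hc : c ∈ BField n) (hx : x ∈ Kspan n) :
    c * x ∈ Kspan n := (Kspan n).smul_mem (⟨c, hc⟩ : BField n) hx

lemma key (n k : ℕ) (hn : 2 ≤ n) (hk : k < n) :
    (-1) ^ k * (eB n 1 * D n (pe n k)) - eB n (2 * k + 1) * D n (pe n 0) ∈ Kspan n := by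
  rcases Nat.eq_zero_or_pos k with rfl | hk0
  · simp
  have h0 : 0 < n - 1 := by omega
  set z : Fin (n - 1) := ⟨0, h0⟩ with hz
  set q : ℕ → Fin (n - 1) → ℕ := fun m => Function.update (pe n k) z (2 * n - 1 - 2 * m) with hq
  have hg : Asym n (Xi1 n (Av n z) *
          ∏ a ∈ Finset.univ.filter (fun a : Fin (n - 1) => 0 < (a : ℕ)),
            (Av n a) ^ (pe n k a)) ∈ Kspan n := by
    refine Submodule.subset_span (Or.inl ⟨h0, pe n k, ?_, rfl⟩)
    intro a
    unfold pe
    split_ifs <;> omega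
  have hfil : Finset.univ.filter (fun a : Fin (n - 1) => 0 < (a : ℕ)) = Finset.univ.erase z := by
    ext a
    simp [hz, Fin.ext_iff, Nat.pos_iff_ne_zero]
  have hmon : ∀ m, Av n z ^ (2 * n - 1 - 2 * m) *
      ∏ a ∈ Finset.univ.filter (fun a : Fin (n - 1) => 0 < (a : ℕ)), (Av n a) ^ (pe n k a)
      = ∏ a, Av n a ^ q m a := by
    intro m
    rw [hfil, ← Finset.mul_prod_erase Finset.univ _ (Finset.mem_univ z)]
    refine congrArg₂ (· * ·) ?_ ?_
    · simp [hq]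
    · refine prod_congr rfl fun a ha => ?_
      simp [hq, Function.update_of_ne (Finset.ne_of_mem_erase ha)]
  have hexp := K_mul n (PiB n) _ (PiB_mem n) hg
  rw [← Asym_mul n _ _ (PiB_mem n), ← mul_assoc, PiB_Xi1, sum_mul, Asym_sum] at hexp
  have h2 : (2 : RatField n) ∈ BField n := ofNat_mem _ 2
  have hterm : ∀ m, Asym n (2 * eB n (2 * m + 1) * Av n z ^ (2 * n - 1 - 2 * m) *
      ∏ a ∈ Finset.univ.filter (fun a : Fin (n - 1) => 0 < (a : ℕ)), (Av n a) ^ (pe n k a))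
      = 2 * eB n (2 * m + 1) * D n (q m) := by
    intro m
    rw [mul_assoc, hmon, Asym_mul _ _ _ (mul_mem h2 (eB_mem n _))]
    rfl
  simp only [hterm] at hexp
  have hsum : ∑ m ∈ range n, 2 * eB n (2 * m + 1) * D n (q m)
      = 2 * eB n (2 * 0 + 1) * D n (q 0) + 2 * eB n (2 * k + 1) * D n (q k) := by
    apply Finset.sum_eq_add_of_mem 0 k (by simp; omega) (by simpa using hk) (by omega)
    rintro m hm ⟨hm0, hmk⟩
    have hm := mem_range.1 hm
    rcases lt_or_gt_of_ne hmk with h | h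
    · have hmz : (⟨m, by omega⟩ : Fin (n - 1)) ≠ z := by simp [hz, Fin.ext_iff, hm0]
      rw [D_zero n (q m) z ⟨m, by omega⟩ hmz.symm, mul_zero]
      simp only [hq, Function.update_self, Function.update_of_ne hmz, pe]
      rw [if_pos h]
      omega
    · have hmz : (⟨m - 1, by omega⟩ : Fin (n - 1)) ≠ z := by
        simp [hz, Fin.ext_iff]; omega
      rw [D_zero n (q m) z ⟨m - 1, by omega⟩ hmz.symm, mul_zero]
      simp only [hq, Function.update_self, Function.update_of_ne hmz, pe]
      rw [if_neg (by omega)]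
      omega
  have hq0 : q 0 = pe n k := by
    simp only [hq]
    rw [Function.update_eq_self_iff]
    simp [pe, hz, hk0]
  have hqk : pe n 0 = q k ∘ Fin.cycleRange (⟨k - 1, by omega⟩ : Fin (n - 1)) := by
    have : NeZero (n - 1) := ⟨by omega⟩
    have hz0 : z = 0 := rfl
    ext a
    simp only [Function.comp]
    rcases lt_trichotomy a (⟨k - 1, by omega⟩ : Fin (n - 1)) with h | h | h
    · have hv := Fin.coe_cycleRange_of_lt h
      have hne : Fin.cycleRange (⟨k - 1, by omega⟩ : Fin (n - 1)) a ≠ z := by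
        intro h'
        rw [h'] at hv
        simp [hz] at hv
      have := Fin.lt_def.1 h
      simp only [hq, Function.update_of_ne hne, pe, hv]
      simp only at this
      rw [if_neg (by omega), if_pos (by omega)]
      omega
    · rw [Fin.cycleRange_of_eq h, ← hz0]
      simp only [hq, Function.update_self, pe, h]
      rw [if_neg (by omega)]
      omega
    · rw [Fin.cycleRange_of_gt h]
      have := Fin.lt_def.1 h
      simp only at this
      have hne : a ≠ z := by
        rintro rfl
        simp [hz] at this
      simp only [hq, Function.update_of_ne hne, pe]
      rw [if_neg (by omega), if_neg (by omega)]
  have hD : D n (pe n 0) = (-1) ^ (k - 1) * D n (q k) := by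
    rw [hqk, D_perm, Fin.sign_cycleRange]
    simp
  rw [hsum, hq0] at hexp
  have hc : (-1) ^ k * (2 : RatField n)⁻¹ ∈ BField n :=
    mul_mem (pow_mem (neg_mem (one_mem _)) _) (inv_mem h2)
  have hfin := K_mul n _ _ hc hexp
  convert hfin using 1
  rw [hD]
  obtain ⟨j, rfl⟩ : ∃ j, k = j + 1 := ⟨k - 1, by omega⟩
  have h2' : (2 : RatField n) ≠ 0 := two_ne_zero
  simp only [Nat.add_sub_cancel, Nat.mul_zero, zero_add, pow_succ]
  field_simp
  ring

lemma prod_pe (n k : ℕ) :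
    (∏ a ∈ Finset.univ.filter (fun a : Fin (n - 1) => (a : ℕ) < k),
            (Av n a) ^ (2 * n + 1 - 2 * ((a : ℕ) + 1))) *
          (∏ a ∈ Finset.univ.filter (fun a : Fin (n - 1) => k ≤ (a : ℕ)),
            (Av n a) ^ (2 * n - 1 - 2 * ((a : ℕ) + 1))) = ∏ a, Av n a ^ pe n k a := by
  rw [← Finset.prod_filter_mul_prod_filter_not Finset.univ (fun a : Fin (n - 1) => (a : ℕ) < k)]
  congr 1
  · refine prod_congr rfl fun a ha => ?_
    rw [pe, if_pos (Finset.mem_filter.1 ha).2]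
  · simp only [not_lt]
    refine prod_congr rfl fun a ha => ?_
    rw [pe, if_neg (not_lt.2 (Finset.mem_filter.1 ha).2)]

lemma prod_pe0 (n : ℕ) :
    ∏ a : Fin (n - 1), (Av n a) ^ (2 * n - 1 - 2 * ((a : ℕ) + 1)) = ∏ a, Av n a ^ pe n 0 a := by
  simp [pe]

end LukHelp

/-- Rewriting of the cycles of Lukyanov's operator `Λ₋₁(y)`: for `n ≥ 2` and
`l ≥ 0`,
`Asym(e₁·∑_{k=0}^{n−1}(−1)^k·h_{l−2k}·∏_{a=1}^{k}A_a^{2n+1−2a}·∏_{a=k+1}^{n−1}A_a^{2n−1−2a}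
  − ∑_{k=0}^{n−1} e_{2k+1}·h_{l−2k}·∏_{a=1}^{n−1}A_a^{2n−1−2a}) ∈ K`. -/
theorem lukyanov_cycle_rewrite (n : ℕ) (hn : 2 ≤ n) (l : ℕ) :
    Asym n (eOne n *
        (∑ k ∈ Finset.range n, (-1 : RatField n) ^ k * hBInt n ((l : ℤ) - 2 * k) *
          (∏ a ∈ Finset.univ.filter (fun a : Fin (n - 1) => (a : ℕ) < k),
            (Av n a) ^ (2 * n + 1 - 2 * ((a : ℕ) + 1))) *
          (∏ a ∈ Finset.univ.filter (fun a : Fin (n - 1) => k ≤ (a : ℕ)),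
            (Av n a) ^ (2 * n - 1 - 2 * ((a : ℕ) + 1)))) -
      ∑ k ∈ Finset.range n, eB n (2 * k + 1) * hBInt n ((l : ℤ) - 2 * k) *
        ∏ a : Fin (n - 1), (Av n a) ^ (2 * n - 1 - 2 * ((a : ℕ) + 1))) ∈
      Kspan n := by
  rw [LukHelp.prod_pe0, mul_sum, ← sum_sub_distrib, LukHelp.Asym_sum]
  refine Submodule.sum_mem _ fun k hk => ?_
  have hh := LukHelp.hBInt_mem n ((l : ℤ) - 2 * k)
  have h := LukHelp.K_mul n _ _ hh (LukHelp.key n k hn (Finset.mem_range.1 hk))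
  convert h using 1
  rw [LukHelp.Asym_sub, mul_assoc _ (∏ a ∈ _, _) (∏ a ∈ _, _), LukHelp.prod_pe, ← mul_assoc,
    LukHelp.eOne_eq,
    LukHelp.Asym_mul _ _ _ (mul_mem (LukHelp.eB_mem n 1)
      (mul_mem (pow_mem (neg_mem (one_mem _)) _) hh)),
    LukHelp.Asym_mul _ _ _ (mul_mem (LukHelp.eB_mem n _) hh)]
  change _ * LukHelp.D n _ - _ * LukHelp.D n _ = _
  ring
end
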